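/- Let A be a completely distributive separated cocomplete V-category with t_A ⊣ sup_A, let B and C be separated cocomplete V-categories, let e : C → B be a cocontinuous V-functor admitting a right adjoint h : B → C (i.e. B(e(c), b) = C(c, h(b)) for all c ∈ C, b ∈ B) such that e(h(b)) = b for all b ∈ B (so e is an epimorphism in V-Sup), and let f : A → B be a cocontinuous V-functor. Then f' : A → C defined by f'(a) := sup_C(c ↦ ⨆_x t_A(a)(x) ⊗ C(c, h(f(x)))) is a cocontinuous V-functor satisfying e ∘ f' = f. Hence every completely distributive cocomplete V-category is projective in V-Sup with respect to epimorphisms. -/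

import Mathlib

/-!
The map `f'` is a left adjoint. For `c` in `C`, the formula for `f'` and the universal property of
`sup_C` give `C(f' a, c) = ⨅ x, [t_A(a)(x), C(h (f x), c)]`. Since `h ∘ f` is a `V`-functor
(`h` is fully faithful because `e ∘ h = id`), `C(h (f -), c)` is a presheaf on `A`, and `t_A ⊣ sup_A`
turns the right-hand side into `A(a, sup_A C(h (f -), c))`. So `f'` has a right adjoint and is
cocontinuous (`cocont_of_adjoint`).

For `e ∘ f' = f`, take `c = h b`: then `B(e (f' a), b) = C(f' a, h b) = A(a, sup_A B(f -, b))`, and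
this is `B(f a, b)` because the cocontinuous `f` is left adjoint to `b ↦ sup_A B(f -, b)`
(`hom_sup_nerve`).
-/

/- `V` is a commutative quantale: a complete lattice with a commutative monoid
structure `(*, 1)` distributing over arbitrary suprema. -/
variable {V : Type*} [CommMonoid V] [CompleteLattice V] [IsQuantale V]

/-- The internal hom `[v,w]` of the commutative quantale `V`. -/
def qhom (v w : V) : V := sSup {u | u * v ≤ w}

/-- A separated cocomplete `V`-category: a `V`-category whose underlying order is
antisymmetric, equipped with `sup : DA → A` satisfying
`A(sup φ, a) = ⨅ a', [φ(a'), A(a',a)]`. -/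
structure SupCat (V : Type*) [CommMonoid V] [CompleteLattice V] [IsQuantale V] where
  carrier : Type*
  hom : carrier → carrier → V
  refl : ∀ x, 1 ≤ hom x x
  trans : ∀ x y z, hom x y * hom y z ≤ hom x z
  separated : ∀ x y, 1 ≤ hom x y → 1 ≤ hom y x → x = y
  sup : {φ : carrier → V // ∀ x y, hom x y * φ y ≤ φ x} → carrier
  hom_sup : ∀ (φ : {φ : carrier → V // ∀ x y, hom x y * φ y ≤ φ x}) (a : carrier),
      hom (sup φ) a = ⨅ a', qhom (φ.1 a') (hom a' a)

/-- The set of contravariant presheaves on a separated cocomplete `V`-category. -/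
abbrev PSh (A : SupCat V) := {φ : A.carrier → V // ∀ x y, A.hom x y * φ y ≤ φ x}

/-- A cocontinuous `V`-functor between separated cocomplete `V`-categories:
`f(sup_A φ) = sup_C(c ↦ ⨆_a φ(a) ⊗ C(c, f(a)))`. -/
def Cocont (A C : SupCat V) (f : A.carrier → C.carrier) : Prop :=
  (∀ x y, A.hom x y ≤ C.hom (f x) (f y)) ∧
  (∀ (φ : PSh A) (χ : PSh C),
      χ.1 = (fun c => ⨆ a, φ.1 a * C.hom c (f a)) → f (A.sup φ) = C.sup χ)

/-- The internal hom is right adjoint to multiplication. -/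
theorem le_qhom_iff {u v w : V} : u ≤ qhom v w ↔ u * v ≤ w := by
  constructor
  · intro hu
    refine (mul_le_mul_left hu v).trans ?_
    rw [qhom, IsQuantale.sSup_mul_distrib]
    exact iSup₂_le fun _ hx => hx
  · intro hu
    exact le_sSup hu

/-- The image `c ↦ ⨆ a, φ a ⊗ C(c, g a)` of a presheaf `φ` on `A` under a map `g : A → C`. -/
def pushPSh {A C : SupCat V} (g : A.carrier → C.carrier) (φ : PSh A) : PSh C :=
  ⟨fun c => ⨆ a, φ.1 a * C.hom c (g a), fun x y => by
    rw [Quantale.mul_iSup_distrib]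
    refine iSup_mono fun a => ?_
    rw [mul_left_comm]
    exact mul_le_mul_right (C.trans x y (g a)) _⟩

/-- The presheaf `C(g -, c)` on `A` attached to a `V`-functor `g : A → C` and an object `c`. -/
def nervePSh {A C : SupCat V} (g : A.carrier → C.carrier)
    (hg : ∀ x y, A.hom x y ≤ C.hom (g x) (g y)) (c : C.carrier) : PSh A :=
  ⟨fun x => C.hom (g x) c, fun x y =>
    (mul_le_mul_left (hg x y) _).trans (C.trans (g x) (g y) c)⟩

/-- Objects representing the same covariant functor are equal, by the Yoneda lemma and
separatedness. -/
theorem SupCat.eq_of_hom_eq (C : SupCat V) {x y : C.carrier}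
    (hxy : ∀ c, C.hom x c = C.hom y c) : x = y :=
  C.separated x y (by rw [hxy]; exact C.refl y) (by rw [← hxy]; exact C.refl x)

/-- The supremum of the image of `φ` under `g` is the colimit of `g` weighted by `φ`. -/
theorem hom_sup_push {A C : SupCat V} (g : A.carrier → C.carrier) (φ : PSh A) (χ : PSh C)
    (hχ : χ.1 = fun c => ⨆ a, φ.1 a * C.hom c (g a)) (c : C.carrier) :
    C.hom (C.sup χ) c = ⨅ a, qhom (φ.1 a) (C.hom (g a) c) := by
  rw [C.hom_sup, hχ]
  refine eq_of_forall_le_iff fun u => ?_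
  simp only [le_iInf_iff, le_qhom_iff, Quantale.mul_iSup_distrib, iSup_le_iff]
  constructor
  · intro hu a
    calc u * φ.1 a = u * (φ.1 a * 1) := by rw [mul_one]
      _ ≤ u * (φ.1 a * C.hom (g a) (g a)) :=
        mul_le_mul_right (mul_le_mul_right (C.refl _) _) _
      _ ≤ C.hom (g a) c := hu (g a) a
  · intro hu c' a
    calc u * (φ.1 a * C.hom c' (g a)) = C.hom c' (g a) * (u * φ.1 a) := by
          rw [← mul_assoc, mul_comm]
      _ ≤ C.hom c' (g a) * C.hom (g a) c := mul_le_mul_right (hu a) _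
      _ ≤ C.hom c' c := C.trans _ _ _

theorem cocont_of_adjoint {A C : SupCat V} (l : A.carrier → C.carrier)
    (r : C.carrier → A.carrier) (hlr : ∀ a c, C.hom (l a) c = A.hom a (r c)) :
    Cocont A C l := by
  constructor
  · intro x y
    rw [hlr]
    calc A.hom x y = A.hom x y * 1 := (mul_one _).symm
      _ ≤ A.hom x y * A.hom y (r (l y)) :=
        mul_le_mul_right (by rw [← hlr]; exact C.refl _) _
      _ ≤ A.hom x (r (l y)) := A.trans _ _ _
  · intro φ χ hχ
    refine C.eq_of_hom_eq fun c => ?_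
    rw [hom_sup_push l φ χ hχ, hlr, A.hom_sup]
    simp only [hlr]

/-- A cocontinuous `f` has the right adjoint `b ↦ sup B(f -, b)`. -/
theorem hom_sup_nerve {A B : SupCat V} (f : A.carrier → B.carrier) (hf : Cocont A B f)
    (a : A.carrier) (b : B.carrier) :
    A.hom a (A.sup (nervePSh f hf.1 b)) = B.hom (f a) b := by
  apply le_antisymm
  · have counit : 1 ≤ B.hom (f (A.sup (nervePSh f hf.1 b))) b := by
      rw [hf.2 _ (pushPSh f (nervePSh f hf.1 b)) rfl, hom_sup_push f _ _ rfl]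
      refine le_iInf fun x => le_qhom_iff.2 ?_
      rw [one_mul]
      exact le_rfl
    calc _ = A.hom a (A.sup (nervePSh f hf.1 b)) * 1 := (mul_one _).symm
      _ ≤ B.hom (f a) (f (A.sup (nervePSh f hf.1 b))) *
          B.hom (f (A.sup (nervePSh f hf.1 b))) b := mul_le_mul' (hf.1 _ _) counit
      _ ≤ B.hom (f a) b := B.trans _ _ _
  · have unit : 1 ≤ A.hom (A.sup (nervePSh f hf.1 b)) (A.sup (nervePSh f hf.1 b)) := A.refl _
    rw [A.hom_sup] at unit
    have ha := le_qhom_iff.1 (unit.trans (iInf_le _ a))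
    rwa [one_mul] at ha

/-- Let `A` be completely distributive (`t_A ⊣ sup_A`), let
`e : C → B` be a cocontinuous `V`-functor with right adjoint `h` satisfying
`e ∘ h = id` (an epimorphism in `V-Sup`), and let `f : A → B` be cocontinuous.
Then `f'(a) := sup_C(c ↦ ⨆_x t_A(a)(x) ⊗ C(c, h(f(x))))` is a cocontinuous
`V`-functor with `e ∘ f' = f`; hence every completely distributive cocomplete
`V`-category is projective in `V-Sup` with respect to epimorphisms. -/
theorem stmt17 (A B C : SupCat V)
    (tA : A.carrier → PSh A)
    (htA : ∀ (a : A.carrier) (φ : PSh A),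
        (⨅ x, qhom ((tA a).1 x) (φ.1 x)) = A.hom a (A.sup φ))
    (e : C.carrier → B.carrier) (he : Cocont C B e)
    (h : B.carrier → C.carrier)
    (hadj : ∀ (c : C.carrier) (b : B.carrier), B.hom (e c) b = C.hom c (h b))
    (hsplit : ∀ b, e (h b) = b)
    (f : A.carrier → B.carrier) (hf : Cocont A B f)
    (f' : A.carrier → C.carrier)
    (hf' : ∀ (a : A.carrier) (χ : PSh C),
        χ.1 = (fun c => ⨆ x, (tA a).1 x * C.hom c (h (f x))) → f' a = C.sup χ) :
    Cocont A C f' ∧ ∀ a, e (f' a) = f a := by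
  have hff : ∀ b b', C.hom (h b) (h b') = B.hom b b' := fun b b' => by
    rw [← hadj, hsplit]
  have hg : ∀ x y, A.hom x y ≤ C.hom (h (f x)) (h (f y)) := fun x y => by
    rw [hff]; exact hf.1 x y
  have key : ∀ a c, C.hom (f' a) c = A.hom a (A.sup (nervePSh (fun x => h (f x)) hg c)) := by
    intro a c
    rw [hf' a (pushPSh (fun x => h (f x)) (tA a)) rfl,
      hom_sup_push (fun x => h (f x)) (tA a) _ rfl, ← htA]
    rfl
  refine ⟨cocont_of_adjoint f' _ key, fun a => B.eq_of_hom_eq fun b => ?_⟩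
  have hnerve : nervePSh (fun x => h (f x)) hg (h b) = nervePSh f hf.1 b :=
    Subtype.ext (funext fun x => hff (f x) b)
  rw [hadj, key, hnerve, hom_sup_nerve f hf]
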